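/- Let 0 < α < 1, let A be a real s×s matrix, and let t₀ > 0. Then for every T > 2t₀ and every t > T one has t^{1-α} ∫_{t-t₀}^{t} (t-τ)^{α-1} ‖E_{α,α}((t-τ)^α A)‖ τ^{α-1} dτ ≤ 2^{1-α} t₀^α E_{α,α+1}(t₀^α ‖A‖), where E_{α,α+1} on the right-hand side is the scalar Mittag-Leffler function evaluated at the real number t₀^α ‖A‖. -/

import Mathlib

open Filter Topology MeasureTheory

attribute [local instance] Matrix.linftyOpNormedAddCommGroup Matrix.linftyOpNormedRing

/-- The matrix Mittag-Leffler function `E_{α,β}(B) = ∑ Bᵏ / Γ(αk + β)`. -/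
noncomputable def ML {s : ℕ} (α β : ℝ) (B : Matrix (Fin s) (Fin s) ℝ) :
    Matrix (Fin s) (Fin s) ℝ :=
  ∑' k : ℕ, (Real.Gamma (α * k + β))⁻¹ • B ^ k

/-- The scalar Mittag-Leffler function `E_{α,β}(z) = ∑ zᵏ / Γ(αk + β)`. -/
noncomputable def mlScalar (α β z : ℝ) : ℝ :=
  ∑' k : ℕ, z ^ k / Real.Gamma (α * k + β)

lemma gamma_ratio (α : ℝ) (hα0 : 0 < α) (x : ℝ) (hx : 1 < x) :
    (x - 1) ^ α * Real.Gamma x ≤ Real.Gamma (x + α) := by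
  have h := Real.convexOn_log_Gamma.slope_mono_adjacent (x := x - 1) (y := x) (z := x + α)
    (by simp; linarith) (by simp; linarith) (by linarith) (by linarith)
  have h1 : Real.Gamma x = (x - 1) * Real.Gamma (x - 1) := by
    have := Real.Gamma_add_one (s := x - 1) (by linarith)
    simpa using this
  have hp1 : 0 < Real.Gamma (x - 1) := Real.Gamma_pos_of_pos (by linarith)
  have hp2 : 0 < Real.Gamma x := Real.Gamma_pos_of_pos (by linarith)
  have hp3 : 0 < Real.Gamma (x + α) := Real.Gamma_pos_of_pos (by linarith)
  have hx1 : 0 < x - 1 := by linarith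
  simp only [Function.comp] at h
  have h2 : Real.log (Real.Gamma x) = Real.log (x - 1) + Real.log (Real.Gamma (x - 1)) := by
    rw [h1, Real.log_mul hx1.ne' hp1.ne']
  have e1 : x - (x - 1) = 1 := by ring
  have e2 : x + α - x = α := by ring
  rw [e1, e2, div_one, le_div_iff₀ hα0] at h
  have hq : 0 < (x - 1) ^ α := Real.rpow_pos_of_pos hx1 _
  rw [← Real.log_le_log_iff (by positivity) hp3, Real.log_mul hq.ne' hp2.ne', Real.log_rpow hx1]
  have h3 : Real.log (Real.Gamma x) - Real.log (Real.Gamma (x - 1)) = Real.log (x - 1) := by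
    linarith
  rw [h3] at h
  linarith

lemma ml_summable (α β z : ℝ) (hα0 : 0 < α) (hβ : 0 < β) (hz : 0 ≤ z) :
    Summable fun k : ℕ => z ^ k / Real.Gamma (α * k + β) := by
  refine summable_of_ratio_norm_eventually_le (r := 1 / 2) (by norm_num) ?_
  have ht1 : Tendsto (fun k : ℕ => α * (k : ℝ) + (β - 1)) atTop atTop :=
    tendsto_atTop_add_const_right _ _ (tendsto_natCast_atTop_atTop.const_mul_atTop hα0)
  have ht2 := (tendsto_rpow_atTop hα0).comp ht1
  filter_upwards [ht1.eventually_gt_atTop 0, ht2.eventually_ge_atTop (2 * z)] with k h1 h2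
  simp only [Function.comp] at h2
  have hg := gamma_ratio α hα0 (α * k + β) (by linarith)
  have hp2 : 0 < Real.Gamma (α * k + β) := Real.Gamma_pos_of_pos (by positivity)
  have e : α * ((k + 1 : ℕ) : ℝ) + β = α * k + β + α := by push_cast; ring
  have hp3 : 0 < Real.Gamma (α * k + β + α) := Real.Gamma_pos_of_pos (by positivity)
  rw [e, Real.norm_of_nonneg (by positivity), Real.norm_of_nonneg (by positivity)]
  have h4 : 2 * z * Real.Gamma (α * k + β) ≤ Real.Gamma (α * k + β + α) := by
    refine le_trans ?_ hg
    refine mul_le_mul_of_nonneg_right ?_ hp2.le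
    rwa [add_sub_assoc]
  rw [← mul_div_assoc, div_le_div_iff₀ hp3 hp2, pow_succ]
  have : 0 ≤ z ^ k := by positivity
  nlinarith

lemma norm_pow_le_mat {s : ℕ} (A : Matrix (Fin s) (Fin s) ℝ) (k : ℕ) : ‖A ^ k‖ ≤ ‖A‖ ^ k := by
  rcases Nat.eq_zero_or_pos s with rfl | hs
  · have : A ^ k = 0 := Subsingleton.elim _ _
    rw [this, norm_zero]; positivity
  · haveI : Nonempty (Fin s) := ⟨⟨0, hs⟩⟩
    exact norm_pow_le A k

lemma ML_bound {s : ℕ} (α c : ℝ) (hα0 : 0 < α) (hc : 0 ≤ c) (A : Matrix (Fin s) (Fin s) ℝ) :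
    ‖ML α α (c • A)‖ ≤ ∑' k : ℕ, (c * ‖A‖) ^ k / Real.Gamma (α * k + α) := by
  letI : NormedSpace ℝ (Matrix (Fin s) (Fin s) ℝ) := Matrix.linftyOpNormedSpace
  unfold ML
  refine tsum_of_norm_bounded
    (ml_summable α α (c * ‖A‖) hα0 hα0 (by positivity)).hasSum fun k => ?_
  have hp : 0 < Real.Gamma (α * k + α) := Real.Gamma_pos_of_pos (by positivity)
  rw [smul_pow, smul_smul, norm_smul, Real.norm_of_nonneg (by positivity), mul_pow, div_eq_inv_mul,
    mul_assoc]
  gcongr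
  exact norm_pow_le_mat A k

/-- Terms of the dominating series. -/
noncomputable def mlF (α a : ℝ) (k : ℕ) (u : ℝ) : ℝ :=
  u ^ (α * k + α - 1) * (a ^ k / Real.Gamma (α * k + α))

lemma mlF_integral (α a t₀ : ℝ) (hα0 : 0 < α) (ht₀ : 0 < t₀) (k : ℕ) :
    ∫ u in Set.Ioc 0 t₀, mlF α a k u =
      t₀ ^ α * ((t₀ ^ α * a) ^ k / Real.Gamma (α * k + (α + 1))) := by
  rw [← intervalIntegral.integral_of_le ht₀.le]
  unfold mlF
  have hk : 0 < α * k + α := by positivity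
  rw [intervalIntegral.integral_mul_const, integral_rpow (Or.inl (by linarith)), sub_add_cancel,
    Real.zero_rpow hk.ne', ← add_assoc, Real.Gamma_add_one hk.ne', Real.rpow_add ht₀,
    Real.rpow_mul ht₀.le, Real.rpow_natCast, mul_pow]
  have hp := Real.Gamma_pos_of_pos hk
  field_simp
  ring

lemma mlF_main (α a t₀ : ℝ) (hα0 : 0 < α) (ha : 0 ≤ a) (ht₀ : 0 < t₀) :
    Integrable (fun u => ∑' k, mlF α a k u) (volume.restrict (Set.Ioc 0 t₀)) ∧
    ∫ u in Set.Ioc 0 t₀, ∑' k, mlF α a k u = t₀ ^ α * mlScalar α (α + 1) (t₀ ^ α * a) := by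
  have hint : ∀ k, Integrable (mlF α a k) (volume.restrict (Set.Ioc 0 t₀)) := by
    intro k
    have hk : 0 < α * k + α := by positivity
    have := (intervalIntegral.intervalIntegrable_rpow' (r := α * k + α - 1) (a := 0) (b := t₀)
      (by linarith)).mul_const (a ^ k / Real.Gamma (α * k + α))
    rwa [intervalIntegrable_iff_integrableOn_Ioc_of_le ht₀.le] at this
  have hz : 0 ≤ t₀ ^ α * a := by positivity
  have hs := (ml_summable α (α + 1) (t₀ ^ α * a) hα0 (by linarith) hz).mul_left (t₀ ^ α)
  have hnorm : ∀ k, ∫ u in Set.Ioc 0 t₀, ‖mlF α a k u‖ = ∫ u in Set.Ioc 0 t₀, mlF α a k u := by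
    intro k
    refine setIntegral_congr_fun measurableSet_Ioc fun u hu => ?_
    have hp : 0 < Real.Gamma (α * k + α) := Real.Gamma_pos_of_pos (by positivity)
    have hu0 : 0 < u := hu.1
    refine Real.norm_of_nonneg ?_
    unfold mlF
    positivity
  have hh := integral_tsum_of_summable_integral_norm hint (by
    simp_rw [hnorm, mlF_integral α a t₀ hα0 ht₀]
    exact hs)
  simp_rw [mlF_integral α a t₀ hα0 ht₀] at hh
  have hpos : 0 < ∑' k : ℕ, t₀ ^ α * ((t₀ ^ α * a) ^ k / Real.Gamma (α * k + (α + 1))) := by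
    refine hs.tsum_pos (fun k => ?_) 0 ?_
    · have hp : 0 < Real.Gamma (α * k + (α + 1)) := Real.Gamma_pos_of_pos (by positivity)
      positivity
    · have hp : 0 < Real.Gamma (α * (0 : ℕ) + (α + 1)) := Real.Gamma_pos_of_pos (by positivity)
      rw [pow_zero]
      positivity
  refine ⟨?_, ?_⟩
  · by_contra hni
    rw [integral_undef hni] at hh
    exact hpos.ne' hh
  · rw [← hh, tsum_mul_left]
    rfl

theorem stmt4 (α : ℝ) (hα0 : 0 < α) (hα1 : α < 1) (s : ℕ)
    (A : Matrix (Fin s) (Fin s) ℝ) (t₀ : ℝ) (ht₀ : 0 < t₀) :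
    ∀ T > 2 * t₀, ∀ t > T,
      t ^ (1 - α) * ∫ τ in (t - t₀)..t,
        (t - τ) ^ (α - 1) * ‖ML α α ((t - τ) ^ α • A)‖ * τ ^ (α - 1)
      ≤ 2 ^ (1 - α) * t₀ ^ α * mlScalar α (α + 1) (t₀ ^ α * ‖A‖) := by
  intro T hT t ht
  have ht0 : 0 < t := by linarith
  have hsub := intervalIntegral.integral_comp_sub_left (a := t - t₀) (b := t)
    (fun u => u ^ (α - 1) * ‖ML α α (u ^ α • A)‖ * (t - u) ^ (α - 1)) t
  simp only [sub_sub_cancel, sub_self] at hsub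
  rw [hsub, intervalIntegral.integral_of_le ht₀.le]
  obtain ⟨hi, he⟩ := mlF_main α ‖A‖ t₀ hα0 (norm_nonneg A) ht₀
  have hle : ∫ u in Set.Ioc 0 t₀, u ^ (α - 1) * ‖ML α α (u ^ α • A)‖ * (t - u) ^ (α - 1) ≤
      ∫ u in Set.Ioc 0 t₀, (∑' k, mlF α ‖A‖ k u) * (t / 2) ^ (α - 1) := by
    refine integral_mono_of_nonneg ?_ (hi.mul_const _) ?_
    · filter_upwards [ae_restrict_mem measurableSet_Ioc] with u hu
      have h1 : 0 < u := hu.1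
      have h2 : 0 < t - u := by linarith [hu.2]
      simp only [Pi.zero_apply]
      positivity
    · filter_upwards [ae_restrict_mem measurableSet_Ioc] with u hu
      have h1 : 0 < u := hu.1
      have h2 : t / 2 ≤ t - u := by linarith [hu.2]
      have h3 : 0 < t - u := by linarith [hu.2]
      have hb := ML_bound α (u ^ α) hα0 (by positivity) A
      have hF : ∑' k, mlF α ‖A‖ k u =
          u ^ (α - 1) * ∑' k : ℕ, (u ^ α * ‖A‖) ^ k / Real.Gamma (α * k + α) := by
        rw [← tsum_mul_left]
        refine tsum_congr fun k => ?_
        unfold mlF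
        rw [add_sub_assoc, Real.rpow_add h1, Real.rpow_mul h1.le, Real.rpow_natCast, mul_pow]
        ring
      have hS : 0 ≤ ∑' k : ℕ, (u ^ α * ‖A‖) ^ k / Real.Gamma (α * k + α) :=
        (norm_nonneg _).trans hb
      rw [hF]
      refine mul_le_mul (mul_le_mul_of_nonneg_left hb (by positivity)) ?_ (by positivity)
        (by positivity)
      exact Real.rpow_le_rpow_of_nonpos (by positivity) h2 (by linarith)
  rw [integral_mul_const, he] at hle
  have hc : t ^ (1 - α) * (t / 2) ^ (α - 1) = 2 ^ (1 - α) := by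
    rw [Real.div_rpow ht0.le (by norm_num), ← mul_div_assoc, ← Real.rpow_add ht0,
      show α - 1 = -(1 - α) by ring, add_neg_cancel, Real.rpow_zero, Real.rpow_neg (by norm_num),
      one_div, inv_inv]
  calc _ ≤ t ^ (1 - α) * (t₀ ^ α * mlScalar α (α + 1) (t₀ ^ α * ‖A‖) * (t / 2) ^ (α - 1)) :=
        mul_le_mul_of_nonneg_left hle (by positivity)
    _ = t ^ (1 - α) * (t / 2) ^ (α - 1) * t₀ ^ α * mlScalar α (α + 1) (t₀ ^ α * ‖A‖) := by ring
    _ = _ := by rw [hc]
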